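/- Let Ω ⊆ ℝ² be open, let g, σ : Ω → (symmetric real 2×2 matrices) be C¹ with g(x) positive definite for all x, and let γ : ℝ → Ω be C² with |γ'(t)| = 1 (Euclidean norm) for all t. Fix t₀ and write q = γ(t₀), τ = γ'(t₀), τ̇ = γ''(t₀), and let ν be the Euclidean rotated normal of τ. For small s define F(s) = ( √(det((g+sσ)(q))) / (τᵀ (g+sσ)(q) τ) ) · ( τ̇·ν + τ^i τ^j Γ^k_{ij}(g+sσ)(q) δ_{kl} ν^l ), which is the geodesic curvature density κ(g+sσ)·√((g+sσ)_{ττ}) of the metric g+sσ along γ at q. Let τ̂(t) = γ'(t)/√(γ'(t)ᵀ g(γ(t)) γ'(t)) and let n̂(t) be the g-unit normal of γ'(t) computed with g(γ(t)). Then F is differentiable at s = 0 with F'(0) = ½ [ (curl_g σ)(q)·τ + d/dt|_{t=t₀} ( τ̂(t)ᵀ σ(γ(t)) n̂(t) ) ], where (curl_g σ)(q)·τ = (curl_g σ)_i(q) τ^i. (First variation of the geodesic curvature density in the direction σ.) -/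

import Mathlib

noncomputable section

open Matrix BigOperators

abbrev Vec2 := Fin 2 → ℝ
abbrev Mat2 := Matrix (Fin 2) (Fin 2) ℝ

/-- The two-dimensional alternating symbol: `eps2 0 1 = 1`, `eps2 1 0 = -1`, `eps2 i i = 0`. -/
def eps2 (i j : Fin 2) : ℝ := (j.1 : ℝ) - (i.1 : ℝ)

/-- Euclidean rotated normal `ν = (-τ², τ¹)` of a vector `τ`. -/
def rot2 (τ : Vec2) : Vec2 := ![-(τ 1), τ 0]

/-- The `g`-rotated normal `ν̃^k = -g^{kj} ε_{ji} τ^i`. -/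
def gNormal (g : Mat2) (τ : Vec2) : Vec2 :=
  fun k => -∑ j, ∑ i, g⁻¹ k j * eps2 j i * τ i

/-- The `g`-unit tangent `τ̂ = τ / √(τᵀ g τ)`. -/
def gUnitTangent (g : Mat2) (τ : Vec2) : Vec2 :=
  (Real.sqrt (τ ⬝ᵥ g.mulVec τ))⁻¹ • τ

/-- The `g`-unit normal `n̂ = ν̃ / √(ν̃ᵀ g ν̃)`. -/
def gUnitNormal (g : Mat2) (τ : Vec2) : Vec2 :=
  (Real.sqrt (gNormal g τ ⬝ᵥ g.mulVec (gNormal g τ)))⁻¹ • gNormal g τ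

/-- Partial derivative `∂_i f (x)`. -/
def pd (i : Fin 2) (f : Vec2 → ℝ) (x : Vec2) : ℝ := fderiv ℝ f x (Pi.single i 1)

/-- Christoffel symbol of the first kind `Γ_{ijl} = ½(∂_i g_{jl} + ∂_j g_{li} - ∂_l g_{ij})`. -/
def Gamma1 (g : Vec2 → Mat2) (x : Vec2) (i j l : Fin 2) : ℝ :=
  (pd i (fun y => g y j l) x + pd j (fun y => g y l i) x - pd l (fun y => g y i j) x) / 2

/-- Christoffel symbol of the second kind `Γ^k_{ij} = g^{kl} Γ_{ijl}`. -/
def Gamma2 (g : Vec2 → Mat2) (x : Vec2) (i j k : Fin 2) : ℝ :=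
  ∑ l, (g x)⁻¹ k l * Gamma1 g x i j l

/-- Euclidean incompatibility `inc σ = ∂₁∂₁σ₂₂ - 2 ∂₁∂₂σ₁₂ + ∂₂∂₂σ₁₁`. -/
def incE (σ : Vec2 → Mat2) (x : Vec2) : ℝ :=
  pd 0 (pd 0 (fun y => σ y 1 1)) x - 2 * pd 0 (pd 1 (fun y => σ y 0 1)) x
    + pd 1 (pd 1 (fun y => σ y 0 0)) x

/-- Covariant curl `(curl_g σ)_i = (det g)^{-1/2} ε^{jk}(∂_j σ_{ik} - Γ^m_{ji} σ_{mk})`. -/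
def curlg (g σ : Vec2 → Mat2) (x : Vec2) (i : Fin 2) : ℝ :=
  (Real.sqrt (g x).det)⁻¹ * ∑ j, ∑ k, eps2 j k *
    (pd j (fun y => σ y i k) x - ∑ m, Gamma2 g x j i m * σ x m k)

/-- Covariant incompatibility `inc_g σ`. -/
def incg (g σ : Vec2 → Mat2) (x : Vec2) : ℝ :=
  ((g x).det)⁻¹ *
    ((∑ q, ∑ i, ∑ j, ∑ k, eps2 q i * eps2 j k * pd j (pd q (fun y => σ y i k)) x)
      - (∑ q, ∑ i, ∑ j, ∑ k, eps2 q i * eps2 j k *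
          pd q (fun y => ∑ m, Gamma2 g y j i m * σ y m k) x)
      - (∑ q, ∑ i, ∑ j, ∑ k, (∑ l, Gamma2 g x l q l) * eps2 q i * eps2 j k *
          (pd j (fun y => σ y i k) x - ∑ m, Gamma2 g x j i m * σ x m k)))

/-- Coordinate Riemann component `R₁₂₂₁ = ∂₁Γ₂₂₁ - ∂₂Γ₁₂₁ - Γ₁₁ₚΓᵖ₂₂ + Γ₂₁ₚΓᵖ₁₂`. -/
def R1221 (g : Vec2 → Mat2) (x : Vec2) : ℝ :=
  pd 0 (fun y => Gamma1 g y 1 1 0) x - pd 1 (fun y => Gamma1 g y 0 1 0) x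
    - (∑ p, Gamma1 g x 0 0 p * Gamma2 g x 1 1 p)
    + (∑ p, Gamma1 g x 1 0 p * Gamma2 g x 0 1 p)

/-
Fix the tangent `u`, let `N` be its `g`-rotated normal, `∇` the covariant derivative of `g`,
`a = u' + A u` the covariant acceleration (`A` the Christoffel matrix in the direction `u`), and
`R = √det g / g(u, u)`. With `D = σ(n̂, n̂) - σ(τ̂, τ̂)`, one finds
  `curl σ · u        = R (∇_u σ(u, N) - ∇_N σ(u, u))`,
  `d/dt σ(τ̂, n̂)      = R (∇_u σ(u, N) + (a · ν) D)`,
  `d/ds (κ √g(u, u)) = R (∇_u σ(u, N) - ½ ∇_N σ(u, u) + ½ (a · ν) D)`,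
and the last line is half the sum of the first two. The second line holds because `∇` is metric and
`(a · ν) D` records the rotation of the frame along the curve; in the third line `D` comes from
varying `R`, and the derivatives of `σ` from varying the Christoffel symbols.
-/

section MatrixCalculus

variable {m n E : Type*} [NormedAddCommGroup E] [NormedSpace ℝ E]

lemma differentiableAt_matrix [Finite m] [Finite n] {M : E → Matrix m n ℝ} {x : E} :
    DifferentiableAt ℝ M x ↔ ∀ i j, DifferentiableAt ℝ (fun y => M y i j) x :=
  have := Fintype.ofFinite m
  have := Fintype.ofFinite n
  (differentiableAt_pi (F' := fun _ => n → ℝ)).trans <| forall_congr' fun _ => differentiableAt_pi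

lemma fderiv_matrix_apply [Finite m] [Finite n] {M : E → Matrix m n ℝ} {x : E}
    (hM : DifferentiableAt ℝ M x) (v : E) (i : m) (j : n) :
    fderiv ℝ M x v i j = fderiv ℝ (fun y => M y i j) x v := by
  have := Fintype.ofFinite m
  have := Fintype.ofFinite n
  have := hasFDerivAt_pi'.1 (hasFDerivAt_pi' (F' := fun _ => n → ℝ) |>.1 hM.hasFDerivAt i) j
  exact congr($this.fderiv v).symm

lemma hasDerivAt_matrix_comp [Finite m] [Finite n] {M : E → Matrix m n ℝ} {γ : ℝ → E} {v : E}
    {t : ℝ} (hM : DifferentiableAt ℝ M (γ t)) (hγ : HasDerivAt γ v t) :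
    HasDerivAt (fun s => M (γ s)) (fderiv ℝ M (γ t) v) t :=
  have := Fintype.ofFinite m
  have := Fintype.ofFinite n
  HasFDerivAt.comp_hasDerivAt (E := m → n → ℝ) t hM.hasFDerivAt hγ

open scoped Matrix.Norms.Elementwise in
lemma hasDerivAt_matrix_add_smul [Finite m] [Finite n] (A B : Matrix m n ℝ) (t : ℝ) :
    HasDerivAt (fun s : ℝ => A + s • B) B t :=
  have := Fintype.ofFinite m
  have := Fintype.ofFinite n
  (((hasDerivAt_id t).smul_const B).const_add A).congr_deriv (one_smul ℝ B)

variable [Fintype n]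

lemma hasDerivAt_dotProduct {u v : ℝ → n → ℝ} {u' v' : n → ℝ} {t : ℝ}
    (hu : HasDerivAt u u' t) (hv : HasDerivAt v v' t) :
    HasDerivAt (fun s => u s ⬝ᵥ v s) (u' ⬝ᵥ v t + u t ⬝ᵥ v') t := by
  simp only [dotProduct, ← Finset.sum_add_distrib]
  exact HasDerivAt.fun_sum fun i _ => (hasDerivAt_pi.1 hu i).fun_mul (hasDerivAt_pi.1 hv i)

lemma hasDerivAt_mulVec [Finite m] {M : ℝ → Matrix m n ℝ} {M' : Matrix m n ℝ} {v : ℝ → n → ℝ}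
    {v' : n → ℝ} {t : ℝ} (hM : HasDerivAt M M' t) (hv : HasDerivAt v v' t) :
    HasDerivAt (fun s => M s *ᵥ v s) (M' *ᵥ v t + M t *ᵥ v') t :=
  have := Fintype.ofFinite m
  hasDerivAt_pi.2 fun i => hasDerivAt_dotProduct (hasDerivAt_pi.1 hM i) hv

variable [DecidableEq n]

open scoped Matrix.Norms.Operator in
lemma hasDerivAt_matrix_inv {M : ℝ → Matrix n n ℝ} {M' : Matrix n n ℝ} {t : ℝ}
    (hM : HasDerivAt M M' t) (h : IsUnit (M t)) :
    HasDerivAt (fun s => (M s)⁻¹) (-((M t)⁻¹ * M' * (M t)⁻¹)) t := by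
  obtain ⟨U, hU⟩ := h
  have inv_deriv := hasFDerivAt_ringInverse (𝕜 := ℝ) U
  rw [hU] at inv_deriv
  simp_rw [nonsing_inv_eq_ringInverse]
  refine (inv_deriv.comp_hasDerivAt t hM).congr_deriv ?_
  simp [← hU]

lemma hasDerivAt_det {M : ℝ → Matrix n n ℝ} {M' : Matrix n n ℝ} {t : ℝ}
    (hM : HasDerivAt M M' t) :
    HasDerivAt (fun s => (M s).det) ((M' * adjugate (M t)).trace) t := by
  let detCMM : ContinuousMultilinearMap ℝ (fun _ : n => n → ℝ) ℝ :=
    ⟨(detRowAlternating (n := n) (R := ℝ)).toMultilinearMap, Continuous.matrix_det continuous_id⟩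
  refine ((detCMM.hasFDerivAt (M t)).comp_hasDerivAt t hM).congr_deriv ?_
  refine (detCMM.linearDeriv_apply (M t) M').trans (Finset.sum_congr rfl fun i _ => ?_)
  calc ((M t).updateRow i (M' i)).det = ((M t)ᵀ.adjugate *ᵥ M' i) i := by
        rw [← cramer_eq_adjugate_mulVec, cramer_transpose_apply]
    _ = (M' * (M t).adjugate) i i := by
        rw [← adjugate_transpose, mulVec_transpose]; rfl

end MatrixCalculus

section RotatedNormal

lemma rot2_eq_mulVec (u : Vec2) : rot2 u = !![0, -1; 1, 0] *ᵥ u := by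
  simp only [rot2, mulVec_eq_sum, Fin.sum_univ_two]
  ext i; fin_cases i <;> simp

lemma rot2_zero : rot2 0 = 0 := by
  rw [rot2_eq_mulVec, mulVec_zero]

lemma rot2_add (u v : Vec2) : rot2 (u + v) = rot2 u + rot2 v := by
  simp only [rot2_eq_mulVec, mulVec_add]

lemma rot2_smul (c : ℝ) (u : Vec2) : rot2 (c • u) = c • rot2 u := by
  simp only [rot2_eq_mulVec, mulVec_smul]

lemma rot2_rot2 (u : Vec2) : rot2 (rot2 u) = -u := by
  ext i; fin_cases i <;> simp [rot2]

lemma rot2_dotProduct_rot2 (u v : Vec2) : rot2 u ⬝ᵥ rot2 v = u ⬝ᵥ v := by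
  simp only [rot2, dotProduct, Fin.sum_univ_two, cons_val_zero, cons_val_one]; ring

lemma transpose_mulVec_rot2 (A : Mat2) (u : Vec2) :
    Aᵀ *ᵥ rot2 u = A.trace • rot2 u - rot2 (A *ᵥ u) := by
  refine funext (Fin.forall_fin_two.2 ⟨?_, ?_⟩) <;>
    simp only [rot2, mulVec, dotProduct, trace, diag_apply, transpose_apply, Fin.sum_univ_two,
      Pi.sub_apply, Pi.smul_apply, smul_eq_mul, cons_val_zero, cons_val_one] <;>
    ring

lemma adjugate_transpose_mulVec_rot2 (A : Mat2) (u : Vec2) :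
    Aᵀ.adjugate *ᵥ rot2 u = rot2 (A *ᵥ u) := by
  rw [adjugate_fin_two]
  refine funext (Fin.forall_fin_two.2 ⟨?_, ?_⟩) <;>
    simp only [rot2, mulVec, dotProduct, transpose_apply, Fin.sum_univ_two, of_apply,
      cons_val_zero, cons_val_one] <;>
    ring

lemma dotProduct_smul_eq_add_rot2 (w u a : Vec2) :
    (w ⬝ᵥ u) • a = (a ⬝ᵥ w) • u + (a ⬝ᵥ rot2 u) • rot2 w := by
  refine funext (Fin.forall_fin_two.2 ⟨?_, ?_⟩) <;>
    simp only [rot2, dotProduct, Fin.sum_univ_two, Pi.add_apply, Pi.smul_apply, smul_eq_mul,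
      cons_val_zero, cons_val_one] <;>
    ring

variable {g : Mat2}

lemma gNormal_eq_inv_mulVec_rot2 (g : Mat2) (u : Vec2) : gNormal g u = g⁻¹ *ᵥ rot2 u := by
  ext k
  simp only [gNormal, eps2, rot2, mulVec, dotProduct, Fin.sum_univ_two, Fin.val_zero, Fin.val_one,
    Nat.cast_zero, Nat.cast_one, cons_val_zero, cons_val_one]
  ring

lemma gNormal_add (g : Mat2) (u v : Vec2) : gNormal g (u + v) = gNormal g u + gNormal g v := by
  simp only [gNormal_eq_inv_mulVec_rot2, rot2_add, mulVec_add]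

lemma gNormal_smul (g : Mat2) (c : ℝ) (u : Vec2) : gNormal g (c • u) = c • gNormal g u := by
  simp only [gNormal_eq_inv_mulVec_rot2, rot2_smul, mulVec_smul]

lemma mulVec_gNormal (hdet : g.det ≠ 0) (u : Vec2) : g *ᵥ gNormal g u = rot2 u := by
  rw [gNormal_eq_inv_mulVec_rot2, mulVec_mulVec, mul_nonsing_inv _ hdet.isUnit, one_mulVec]

lemma gNormal_eq_inv_det_smul_rot2 (hg : g.IsSymm) (u : Vec2) :
    gNormal g u = g.det⁻¹ • rot2 (g *ᵥ u) := by
  rw [gNormal_eq_inv_mulVec_rot2, inv_def, Ring.inverse_eq_inv', smul_mulVec,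
    ← adjugate_transpose_mulVec_rot2, hg.eq]

lemma gNormal_gNormal (hg : g.IsSymm) (hdet : g.det ≠ 0) (u : Vec2) :
    gNormal g (gNormal g u) = -g.det⁻¹ • u := by
  rw [gNormal_eq_inv_det_smul_rot2 hg, mulVec_gNormal hdet, rot2_rot2, smul_neg, neg_smul]

lemma gNormal_dotProduct_mulVec_gNormal (hg : g.IsSymm) (hdet : g.det ≠ 0) (u : Vec2) :
    gNormal g u ⬝ᵥ g *ᵥ gNormal g u = (u ⬝ᵥ g *ᵥ u) / g.det := by
  rw [mulVec_gNormal hdet, gNormal_eq_inv_det_smul_rot2 hg, smul_dotProduct, rot2_dotProduct_rot2,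
    dotProduct_comm, smul_eq_mul, inv_mul_eq_div]

lemma smul_eq_tangent_add_gNormal (hg : g.IsSymm) (hdet : g.det ≠ 0) (u a : Vec2) :
    (u ⬝ᵥ g *ᵥ u) • a =
      (a ⬝ᵥ g *ᵥ u) • u + (g.det * (a ⬝ᵥ rot2 u)) • gNormal g u := by
  rw [gNormal_eq_inv_det_smul_rot2 hg, smul_smul, mul_right_comm, mul_inv_cancel₀ hdet, one_mul,
    dotProduct_comm u, dotProduct_smul_eq_add_rot2]

lemma dotProduct_mulVec_self_mul_trace (hg : g.IsSymm) (hdet : g.det ≠ 0) (u : Vec2) (S : Mat2) :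
    (u ⬝ᵥ g *ᵥ u) * (g⁻¹ * S).trace =
      u ⬝ᵥ S *ᵥ u + g.det * (gNormal g u ⬝ᵥ S *ᵥ gNormal g u) := by
  have h10 : g 1 0 = g 0 1 := hg.apply 0 1
  rw [gNormal_eq_inv_det_smul_rot2 hg, inv_def, adjugate_fin_two, Ring.inverse_eq_inv']
  simp only [mulVec_smul, smul_dotProduct, dotProduct_smul, smul_mul, trace_smul, smul_eq_mul]
  field_simp
  simp only [rot2, mulVec, dotProduct, trace, diag_apply, mul_apply, Fin.sum_univ_two, h10,
    of_apply, cons_val_zero, cons_val_one, det_fin_two]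
  ring

/-- The ratio `√det g / g(u, u)` of the area density of `g` to the squared `g`-length of `u`. For
positive definite `g` it is the product of the reciprocal `g`-lengths of `u` and `gNormal g u`. -/
def areaLengthRatio (g : Mat2) (u : Vec2) : ℝ := √g.det / (u ⬝ᵥ g *ᵥ u)

/-- The difference `S(n̂, n̂) - S(τ̂, τ̂)` of the normal and tangential components of `S` in the
`g`-orthonormal frame of `u`, written with `gNormal g u` to avoid square roots. -/
def normalSubTangential (g S : Mat2) (u : Vec2) : ℝ :=
  (g.det * (gNormal g u ⬝ᵥ S *ᵥ gNormal g u) - u ⬝ᵥ S *ᵥ u) / (u ⬝ᵥ g *ᵥ u)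

/- Along a curve the frame `(u, gNormal g u)` moves with velocity `(a, gNormal g a)`, which is a
rotation up to scaling; so the mixed component of `S` varies by normal minus tangential. -/
lemma dotProduct_rot2_mul_normalSubTangential (hg : g.IsSymm) (hdet : g.det ≠ 0) {u : Vec2}
    (hu : u ⬝ᵥ g *ᵥ u ≠ 0) (S : Mat2) (a : Vec2) :
    a ⬝ᵥ rot2 u * normalSubTangential g S u =
      a ⬝ᵥ S *ᵥ gNormal g u + u ⬝ᵥ S *ᵥ gNormal g a
        - 2 * (a ⬝ᵥ g *ᵥ u) / (u ⬝ᵥ g *ᵥ u) * (u ⬝ᵥ S *ᵥ gNormal g u) := by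
  have ha : a = ((a ⬝ᵥ g *ᵥ u) / (u ⬝ᵥ g *ᵥ u)) • u
      + (g.det * (a ⬝ᵥ rot2 u) / (u ⬝ᵥ g *ᵥ u)) • gNormal g u := by
    rw [div_eq_inv_mul, div_eq_inv_mul, ← smul_smul, ← smul_smul, ← smul_add,
      ← smul_eq_tangent_add_gNormal hg hdet, inv_smul_smul₀ hu]
  have hNa : gNormal g a = ((a ⬝ᵥ g *ᵥ u) / (u ⬝ᵥ g *ᵥ u)) • gNormal g u
      - ((a ⬝ᵥ rot2 u) / (u ⬝ᵥ g *ᵥ u)) • u := by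
    conv_lhs => rw [ha, gNormal_add, gNormal_smul, gNormal_smul, gNormal_gNormal hg hdet]
    rw [smul_smul, sub_eq_add_neg, ← neg_smul]
    congr 2
    field_simp
  have haS := congr($ha ⬝ᵥ S *ᵥ gNormal g u)
  rw [add_dotProduct, smul_dotProduct, smul_dotProduct] at haS
  rw [haS, hNa, normalSubTangential, mulVec_sub, mulVec_smul, mulVec_smul, dotProduct_sub,
    dotProduct_smul, dotProduct_smul]
  simp only [smul_eq_mul]
  ring

lemma gUnitTangent_dotProduct_mulVec_gUnitNormal (hg : g.IsSymm) (hdet : 0 < g.det) (S : Mat2)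
    {u : Vec2} (hu : 0 ≤ u ⬝ᵥ g *ᵥ u) :
    gUnitTangent g u ⬝ᵥ S *ᵥ gUnitNormal g u =
      areaLengthRatio g u * (u ⬝ᵥ S *ᵥ gNormal g u) := by
  have hratio : (√(u ⬝ᵥ g *ᵥ u))⁻¹ * (√((u ⬝ᵥ g *ᵥ u) / g.det))⁻¹ = areaLengthRatio g u := by
    rw [areaLengthRatio, Real.sqrt_div hu, inv_div, inv_mul_eq_div, div_div, Real.mul_self_sqrt hu]
  rw [gUnitTangent, gUnitNormal, gNormal_dotProduct_mulVec_gNormal hg hdet.ne', mulVec_smul,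
    smul_dotProduct, dotProduct_smul, smul_eq_mul, smul_eq_mul, ← mul_assoc, hratio]

end RotatedNormal

section MovingNormal

variable {M : ℝ → Mat2} {M' : Mat2} {u : ℝ → Vec2} {u' : Vec2} {t : ℝ}

lemma hasDerivAt_rot2 (hu : HasDerivAt u u' t) : HasDerivAt (fun s => rot2 (u s)) (rot2 u') t := by
  have hcoord := hasDerivAt_pi.1 hu
  exact hasDerivAt_pi.2 (Fin.forall_fin_two.2 ⟨(hcoord 1).fun_neg, hcoord 0⟩)

lemma hasDerivAt_gNormal (hM : HasDerivAt M M' t) (hu : HasDerivAt u u' t) (hdet : (M t).det ≠ 0) :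
    HasDerivAt (fun s => gNormal (M s) (u s))
      (gNormal (M t) u' - (M t)⁻¹ *ᵥ M' *ᵥ gNormal (M t) (u t)) t := by
  have hinv := hasDerivAt_matrix_inv hM ((isUnit_iff_isUnit_det _).2 hdet.isUnit)
  simp only [gNormal_eq_inv_mulVec_rot2]
  refine (hasDerivAt_mulVec hinv (hasDerivAt_rot2 hu)).congr_deriv ?_
  simp only [neg_mulVec, mulVec_mulVec, mul_assoc]
  abel

lemma hasDerivAt_areaLengthRatio (hM : HasDerivAt M M' t) (hu : HasDerivAt u u' t)
    (hsymm : (M t).IsSymm) (hdet : 0 < (M t).det) (hlen : u t ⬝ᵥ M t *ᵥ u t ≠ 0) :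
    HasDerivAt (fun s => areaLengthRatio (M s) (u s))
      (areaLengthRatio (M t) (u t) * (((M t)⁻¹ * M').trace / 2 -
        (2 * (u' ⬝ᵥ M t *ᵥ u t) + u t ⬝ᵥ M' *ᵥ u t) / (u t ⬝ᵥ M t *ᵥ u t))) t := by
  have hlen' := hasDerivAt_dotProduct hu (hasDerivAt_mulVec hM hu)
  have htrace : (M' * (M t).adjugate).trace = (M t).det * ((M t)⁻¹ * M').trace := by
    rw [inv_def, Ring.inverse_eq_inv', smul_mul, trace_smul, smul_eq_mul, trace_mul_comm,
      mul_inv_cancel_left₀ hdet.ne']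
  have hcomm : u t ⬝ᵥ M t *ᵥ u' = u' ⬝ᵥ M t *ᵥ u t := by
    rw [dotProduct_mulVec, ← mulVec_transpose, hsymm.eq, dotProduct_comm]
  have hsqrt := Real.sqrt_ne_zero'.2 hdet
  refine (((hasDerivAt_det hM).sqrt hdet.ne').fun_div hlen' hlen).congr_deriv ?_
  rw [htrace, dotProduct_add, hcomm, areaLengthRatio]
  field_simp
  rw [Real.sq_sqrt hdet.le]
  ring

lemma hasDerivAt_gNormal_add_smul {g : Mat2} (hdet : g.det ≠ 0) (S : Mat2) (u : Vec2) :
    HasDerivAt (fun s : ℝ => gNormal (g + s • S) u) (-(g⁻¹ *ᵥ S *ᵥ gNormal g u)) 0 := by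
  have h := hasDerivAt_gNormal (hasDerivAt_matrix_add_smul g S 0) (hasDerivAt_const 0 u)
  simp only [zero_smul, add_zero] at h
  refine (h hdet).congr_deriv ?_
  rw [gNormal_eq_inv_mulVec_rot2 g 0, rot2_zero, mulVec_zero, zero_sub]

lemma hasDerivAt_areaLengthRatio_add_smul {g : Mat2} (hg : g.IsSymm) (hdet : 0 < g.det) (S : Mat2)
    {u : Vec2} (hu : u ⬝ᵥ g *ᵥ u ≠ 0) :
    HasDerivAt (fun s : ℝ => areaLengthRatio (g + s • S) u)
      (areaLengthRatio g u * (normalSubTangential g S u / 2)) 0 := by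
  have h := hasDerivAt_areaLengthRatio (hasDerivAt_matrix_add_smul g S 0) (hasDerivAt_const 0 u)
  simp only [zero_smul, add_zero] at h
  refine (h hg hdet hu).congr_deriv ?_
  have htrace := eq_div_of_mul_eq hu
    ((mul_comm _ _).trans (dotProduct_mulVec_self_mul_trace hg hdet.ne' u S))
  rw [htrace, normalSubTangential, zero_dotProduct]
  ring

end MovingNormal

section Connection

open Filter Topology

lemma fderiv_matrix_apply_eq_pd {h : Vec2 → Mat2} {x : Vec2} (hh : DifferentiableAt ℝ h x)
    (v : Vec2) (i j : Fin 2) :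
    fderiv ℝ h x v i j = ∑ k, v k * pd k (fun y => h y i j) x := by
  have hv : v = ∑ k, v k • (Pi.single k 1 : Vec2) := pi_eq_sum_univ' v
  rw [fderiv_matrix_apply hh]
  conv_lhs => rw [hv]
  simp only [map_sum, map_smul, smul_eq_mul, pd]

lemma pd_matrix_apply_comm {h : Vec2 → Mat2} {x : Vec2} (hh : ∀ᶠ y in 𝓝 x, (h y).IsSymm)
    (k i j : Fin 2) : pd k (fun y => h y i j) x = pd k (fun y => h y j i) x := by
  have : (fun y => h y i j) =ᶠ[𝓝 x] fun y => h y j i := hh.mono fun y hy => hy.apply j i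
  rw [pd, this.fderiv_eq, pd]

variable {g σ : Vec2 → Mat2} {x : Vec2}

/-- The Christoffel symbols of the first kind contracted with a direction: the matrix
`(l, j) ↦ u^i Γ_{ijl}`. -/
def christoffelLower (g : Vec2 → Mat2) (x u : Vec2) : Mat2 :=
  of fun l j => ∑ i, u i * Gamma1 g x i j l

/-- The connection form of the metric `g` in the direction `u`: the matrix `(k, j) ↦ u^i Γ^k_{ij}`,
for which `∇_u w = ∂_u w + connectionMatrix g x u *ᵥ w`. -/
def connectionMatrix (g : Vec2 → Mat2) (x u : Vec2) : Mat2 :=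
  of fun k j => ∑ i, u i * Gamma2 g x i j k

lemma connectionMatrix_eq (g : Vec2 → Mat2) (x u : Vec2) :
    connectionMatrix g x u = (g x)⁻¹ * christoffelLower g x u := by
  ext k j
  simp only [connectionMatrix, christoffelLower, Gamma2, of_apply, mul_apply, Fin.sum_univ_two]
  ring

lemma inv_mulVec_dotProduct_christoffelLower (hsymm : (g x).IsSymm) (u v w : Vec2) :
    (g x)⁻¹ *ᵥ w ⬝ᵥ christoffelLower g x u *ᵥ v = w ⬝ᵥ connectionMatrix g x u *ᵥ v := by
  rw [connectionMatrix_eq, ← mulVec_mulVec, dotProduct_mulVec w, ← mulVec_transpose,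
    transpose_nonsing_inv, hsymm.eq]

lemma mul_connectionMatrix (hdet : (g x).det ≠ 0) (u : Vec2) :
    g x * connectionMatrix g x u = christoffelLower g x u := by
  rw [connectionMatrix_eq, mul_nonsing_inv_cancel_left _ _ hdet.isUnit]

lemma Gamma1_comm (hsymm : ∀ᶠ y in 𝓝 x, (g y).IsSymm) (i j l : Fin 2) :
    Gamma1 g x i j l = Gamma1 g x j i l := by
  simp only [Gamma1, pd_matrix_apply_comm hsymm _ l, pd_matrix_apply_comm hsymm _ j i]
  ring

lemma Gamma2_comm (hsymm : ∀ᶠ y in 𝓝 x, (g y).IsSymm) (i j k : Fin 2) :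
    Gamma2 g x i j k = Gamma2 g x j i k := by
  simp only [Gamma2, Gamma1_comm hsymm i j]

lemma connectionMatrix_mulVec_comm (hsymm : ∀ᶠ y in 𝓝 x, (g y).IsSymm) (u v : Vec2) :
    connectionMatrix g x u *ᵥ v = connectionMatrix g x v *ᵥ u := by
  ext k
  simp only [connectionMatrix, mulVec, dotProduct, of_apply, Fin.sum_univ_two,
    Gamma2_comm hsymm 1 0]
  ring

lemma christoffelLower_add_transpose (hg : DifferentiableAt ℝ g x)
    (hsymm : ∀ᶠ y in 𝓝 x, (g y).IsSymm) (u : Vec2) :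
    christoffelLower g x u + (christoffelLower g x u)ᵀ = fderiv ℝ g x u := by
  ext l j
  rw [fderiv_matrix_apply_eq_pd hg, Matrix.add_apply, transpose_apply]
  simp only [christoffelLower, of_apply, ← Finset.sum_add_distrib, ← mul_add]
  refine Finset.sum_congr rfl fun i _ => ?_
  simp only [Gamma1, pd_matrix_apply_comm hsymm _ l, pd_matrix_apply_comm hsymm _ j i]
  ring

lemma dotProduct_christoffelLower_mulVec_self (hg : DifferentiableAt ℝ g x)
    (hsymm : ∀ᶠ y in 𝓝 x, (g y).IsSymm) (u v : Vec2) :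
    v ⬝ᵥ christoffelLower g x u *ᵥ u =
      u ⬝ᵥ fderiv ℝ g x u *ᵥ v - (u ⬝ᵥ fderiv ℝ g x v *ᵥ u) / 2 := by
  simp only [christoffelLower, Gamma1, mulVec, dotProduct, of_apply, Fin.sum_univ_two,
    fderiv_matrix_apply_eq_pd hg, pd_matrix_apply_comm hsymm _ 1 0]
  ring

lemma pd_matrix_apply_add_smul (hg : DifferentiableAt ℝ g x) (hσ : DifferentiableAt ℝ σ x)
    (s : ℝ) (k i j : Fin 2) :
    pd k (fun y => (g y + s • σ y) i j) x =
      pd k (fun y => g y i j) x + s * pd k (fun y => σ y i j) x := by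
  have hgij := (differentiableAt_matrix.1 hg i j).hasFDerivAt
  have hσij := (differentiableAt_matrix.1 hσ i j).hasFDerivAt
  exact congr($((hgij.add (hσij.const_smul s)).fderiv) (Pi.single k 1))

lemma christoffelLower_add_smul (hg : DifferentiableAt ℝ g x) (hσ : DifferentiableAt ℝ σ x)
    (s : ℝ) (u : Vec2) :
    christoffelLower (fun y => g y + s • σ y) x u =
      christoffelLower g x u + s • christoffelLower σ x u := by
  ext l j
  simp only [christoffelLower, Gamma1, pd_matrix_apply_add_smul hg hσ, of_apply]
  simp only [Matrix.add_apply, Matrix.smul_apply, of_apply, smul_eq_mul, Fin.sum_univ_two]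
  ring

lemma fderiv_eq_mul_connectionMatrix (hg : DifferentiableAt ℝ g x)
    (hsymm : ∀ᶠ y in 𝓝 x, (g y).IsSymm) (hdet : (g x).det ≠ 0) (u : Vec2) :
    fderiv ℝ g x u = g x * connectionMatrix g x u + (connectionMatrix g x u)ᵀ * g x := by
  rw [← christoffelLower_add_transpose hg hsymm, ← mul_connectionMatrix hdet, transpose_mul,
    hsymm.self_of_nhds.eq]

lemma trace_inv_mul_fderiv (hg : DifferentiableAt ℝ g x)
    (hsymm : ∀ᶠ y in 𝓝 x, (g y).IsSymm) (hdet : (g x).det ≠ 0) (u : Vec2) :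
    ((g x)⁻¹ * fderiv ℝ g x u).trace = 2 * (connectionMatrix g x u).trace := by
  rw [fderiv_eq_mul_connectionMatrix hg hsymm hdet, mul_add, trace_add,
    nonsing_inv_mul_cancel_left _ _ hdet.isUnit, ← mul_assoc, trace_mul_comm (_ * _),
    mul_nonsing_inv_cancel_left _ _ hdet.isUnit, trace_transpose, two_mul]

/-- The covariant derivative `∇_u σ` at `x` of a field `σ` of bilinear forms, with respect to the
Levi-Civita connection of `g`. -/
def covDeriv (g σ : Vec2 → Mat2) (x u : Vec2) : Mat2 :=
  fderiv ℝ σ x u - (connectionMatrix g x u)ᵀ * σ x - σ x * connectionMatrix g x u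

lemma rot2_dotProduct_mul_sum_curlg (hσ : DifferentiableAt ℝ σ x)
    (hsymm : ∀ᶠ y in 𝓝 x, (g y).IsSymm) (w u v : Vec2) :
    (rot2 u ⬝ᵥ v) * ∑ i, curlg g σ x i * w i =
      (√(g x).det)⁻¹ * (w ⬝ᵥ covDeriv g σ x u *ᵥ v - w ⬝ᵥ covDeriv g σ x v *ᵥ u) := by
  simp only [curlg, covDeriv, connectionMatrix, rot2, eps2, mulVec, dotProduct, of_apply,
    Matrix.sub_apply, mul_apply, transpose_apply, Fin.sum_univ_two,
    fderiv_matrix_apply_eq_pd hσ, Gamma2_comm hsymm 1 0]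
  simp only [Fin.val_zero, Fin.val_one, cons_val_zero, cons_val_one, Nat.cast_zero, Nat.cast_one,
    zero_mul, sub_self]
  ring

end Connection

section FirstVariation

open Filter Topology

lemma sum_curlg_mul {g σ : Vec2 → Mat2} {x : Vec2} (hσ : DifferentiableAt ℝ σ x)
    (hsymm : ∀ᶠ y in 𝓝 x, (g y).IsSymm) (hdet : 0 < (g x).det) {u : Vec2}
    (hlen : u ⬝ᵥ g x *ᵥ u ≠ 0) (w : Vec2) :
    ∑ i, curlg g σ x i * w i = areaLengthRatio (g x) u *
      (w ⬝ᵥ covDeriv g σ x u *ᵥ gNormal (g x) u - w ⬝ᵥ covDeriv g σ x (gNormal (g x) u) *ᵥ u) := by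
  have hnormal : rot2 u ⬝ᵥ gNormal (g x) u = (u ⬝ᵥ g x *ᵥ u) / (g x).det := by
    rw [← gNormal_dotProduct_mulVec_gNormal hsymm.self_of_nhds hdet.ne',
      mulVec_gNormal hdet.ne', dotProduct_comm]
  have hcurl := rot2_dotProduct_mul_sum_curlg hσ hsymm w u (gNormal (g x) u)
  have hsqrt := Real.sqrt_ne_zero'.2 hdet
  rw [hnormal, div_mul_eq_mul_div, div_eq_iff hdet.ne', mul_comm, ← eq_div_iff hlen] at hcurl
  rw [hcurl, areaLengthRatio]
  field_simp
  rw [Real.sq_sqrt hdet.le, mul_comm]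

section AlongCurve

variable {g σ : Vec2 → Mat2} {γ u : ℝ → Vec2} {v u' : Vec2} {t : ℝ}

lemma hasDerivAt_gNormal_comp (hg : DifferentiableAt ℝ g (γ t))
    (hsymm : ∀ᶠ y in 𝓝 (γ t), (g y).IsSymm) (hdet : (g (γ t)).det ≠ 0)
    (hγ : HasDerivAt γ v t) (hu : HasDerivAt u u' t) :
    HasDerivAt (fun s => gNormal (g (γ s)) (u s))
      (gNormal (g (γ t)) (u' + connectionMatrix g (γ t) v *ᵥ u t)
        - (connectionMatrix g (γ t) v).trace • gNormal (g (γ t)) (u t)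
        - connectionMatrix g (γ t) v *ᵥ gNormal (g (γ t)) (u t)) t := by
  refine (hasDerivAt_gNormal (hasDerivAt_matrix_comp hg hγ) hu hdet).congr_deriv ?_
  rw [fderiv_eq_mul_connectionMatrix hg hsymm hdet, add_mulVec, mulVec_add, ← mulVec_mulVec _ _ᵀ,
    mulVec_gNormal hdet, transpose_mulVec_rot2, mulVec_mulVec,
    nonsing_inv_mul_cancel_left _ _ hdet.isUnit, mulVec_sub, mulVec_smul,
    ← gNormal_eq_inv_mulVec_rot2, ← gNormal_eq_inv_mulVec_rot2, gNormal_add]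
  abel

lemma hasDerivAt_areaLengthRatio_comp (hg : DifferentiableAt ℝ g (γ t))
    (hsymm : ∀ᶠ y in 𝓝 (γ t), (g y).IsSymm) (hdet : 0 < (g (γ t)).det)
    (hγ : HasDerivAt γ v t) (hu : HasDerivAt u u' t) (hlen : u t ⬝ᵥ g (γ t) *ᵥ u t ≠ 0) :
    HasDerivAt (fun s => areaLengthRatio (g (γ s)) (u s))
      (areaLengthRatio (g (γ t)) (u t) * ((connectionMatrix g (γ t) v).trace -
        2 * ((u' + connectionMatrix g (γ t) v *ᵥ u t) ⬝ᵥ g (γ t) *ᵥ u t) /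
          (u t ⬝ᵥ g (γ t) *ᵥ u t))) t := by
  have hcompat : u t ⬝ᵥ fderiv ℝ g (γ t) v *ᵥ u t =
      2 * (connectionMatrix g (γ t) v *ᵥ u t ⬝ᵥ g (γ t) *ᵥ u t) := by
    rw [fderiv_eq_mul_connectionMatrix hg hsymm hdet.ne', add_mulVec, dotProduct_add,
      ← mulVec_mulVec, ← mulVec_mulVec, dotProduct_mulVec _ (g _), ← mulVec_transpose,
      hsymm.self_of_nhds.eq, dotProduct_mulVec _ _ᵀ, vecMul_transpose, dotProduct_comm, two_mul]
  refine (hasDerivAt_areaLengthRatio (hasDerivAt_matrix_comp hg hγ) hu hsymm.self_of_nhds hdet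
    hlen).congr_deriv ?_
  rw [trace_inv_mul_fderiv hg hsymm hdet.ne', hcompat, add_dotProduct]
  ring

lemma hasDerivAt_dotProduct_mulVec_comp (hσ : DifferentiableAt ℝ σ (γ t))
    (hγ : HasDerivAt γ v t) {w : ℝ → Vec2} {w' : Vec2} (hu : HasDerivAt u u' t)
    (hw : HasDerivAt w w' t) :
    HasDerivAt (fun s => u s ⬝ᵥ σ (γ s) *ᵥ w s)
      ((u' + connectionMatrix g (γ t) v *ᵥ u t) ⬝ᵥ σ (γ t) *ᵥ w t
        + u t ⬝ᵥ covDeriv g σ (γ t) v *ᵥ w t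
        + u t ⬝ᵥ σ (γ t) *ᵥ (w' + connectionMatrix g (γ t) v *ᵥ w t)) t := by
  refine (hasDerivAt_dotProduct hu
    (hasDerivAt_mulVec (hasDerivAt_matrix_comp hσ hγ) hw)).congr_deriv ?_
  simp only [covDeriv, sub_mulVec, dotProduct_sub, add_dotProduct, mulVec_add, dotProduct_add,
    ← mulVec_mulVec, dotProduct_mulVec _ _ᵀ, vecMul_transpose]
  ring

lemma hasDerivAt_areaLengthRatio_mul_dotProduct_gNormal (hg : DifferentiableAt ℝ g (γ t))
    (hσ : DifferentiableAt ℝ σ (γ t)) (hsymm : ∀ᶠ y in 𝓝 (γ t), (g y).IsSymm)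
    (hdet : 0 < (g (γ t)).det) (hγ : HasDerivAt γ v t) (hu : HasDerivAt u u' t)
    (hlen : u t ⬝ᵥ g (γ t) *ᵥ u t ≠ 0) :
    HasDerivAt (fun s => areaLengthRatio (g (γ s)) (u s) *
        (u s ⬝ᵥ σ (γ s) *ᵥ gNormal (g (γ s)) (u s)))
      (areaLengthRatio (g (γ t)) (u t) *
        (u t ⬝ᵥ covDeriv g σ (γ t) v *ᵥ gNormal (g (γ t)) (u t) +
          (u' + connectionMatrix g (γ t) v *ᵥ u t) ⬝ᵥ rot2 (u t) *
            normalSubTangential (g (γ t)) (σ (γ t)) (u t))) t := by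
  have hN := hasDerivAt_gNormal_comp hg hsymm hdet.ne' hγ hu
  have hR := hasDerivAt_areaLengthRatio_comp hg hsymm hdet hγ hu hlen
  refine (hR.fun_mul (hasDerivAt_dotProduct_mulVec_comp (g := g) hσ hγ hu hN)).congr_deriv ?_
  rw [dotProduct_rot2_mul_normalSubTangential hsymm.self_of_nhds hdet.ne' hlen, sub_add_cancel,
    mulVec_sub, mulVec_smul, dotProduct_sub, dotProduct_smul, smul_eq_mul]
  ring

end AlongCurve

/-- The geodesic curvature density `κ √g(u, u)` at `x` of a curve with velocity `u` and acceleration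
`u'`, with the curvature expressed by the Euclidean normal component of the covariant
acceleration. -/
def geodesicCurvatureDensity (g : Vec2 → Mat2) (x u u' : Vec2) : ℝ :=
  areaLengthRatio (g x) u * ((u' + connectionMatrix g x u *ᵥ u) ⬝ᵥ rot2 u)

lemma geodesicCurvatureDensity_eq_sum (g : Vec2 → Mat2) (x u u' : Vec2) :
    geodesicCurvatureDensity g x u u' = √(g x).det / (u ⬝ᵥ g x *ᵥ u) *
      (u' ⬝ᵥ rot2 u + ∑ i, ∑ j, ∑ k, u i * u j * Gamma2 g x i j k * rot2 u k) := by
  rw [geodesicCurvatureDensity, areaLengthRatio, add_dotProduct]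
  congr 2
  simp only [connectionMatrix, mulVec, dotProduct, of_apply, Fin.sum_univ_two]
  ring

lemma geodesicCurvatureDensity_eq_gNormal {g : Vec2 → Mat2} {x : Vec2} (hsymm : (g x).IsSymm)
    (u u' : Vec2) :
    geodesicCurvatureDensity g x u u' = areaLengthRatio (g x) u *
      (u' ⬝ᵥ rot2 u + gNormal (g x) u ⬝ᵥ christoffelLower g x u *ᵥ u) := by
  rw [geodesicCurvatureDensity, add_dotProduct, gNormal_eq_inv_mulVec_rot2,
    inv_mulVec_dotProduct_christoffelLower hsymm, dotProduct_comm (_ *ᵥ _)]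

lemma dotProduct_christoffelLower_mulVec_self_sub {g σ : Vec2 → Mat2} {x : Vec2}
    (hσ : DifferentiableAt ℝ σ x) (hsymm : ∀ᶠ y in 𝓝 x, (g y).IsSymm)
    (hσsymm : ∀ᶠ y in 𝓝 x, (σ y).IsSymm) (u v : Vec2) :
    v ⬝ᵥ christoffelLower σ x u *ᵥ u - σ x *ᵥ v ⬝ᵥ connectionMatrix g x u *ᵥ u =
      u ⬝ᵥ covDeriv g σ x u *ᵥ v - (u ⬝ᵥ covDeriv g σ x v *ᵥ u) / 2 := by
  have hcomm : connectionMatrix g x u *ᵥ v ⬝ᵥ σ x *ᵥ u =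
      u ⬝ᵥ σ x *ᵥ connectionMatrix g x u *ᵥ v := by
    rw [dotProduct_mulVec u, ← mulVec_transpose, hσsymm.self_of_nhds.eq, dotProduct_comm]
  rw [dotProduct_christoffelLower_mulVec_self hσ hσsymm]
  simp only [covDeriv, sub_mulVec, dotProduct_sub, ← mulVec_mulVec, dotProduct_mulVec _ _ᵀ,
    vecMul_transpose, connectionMatrix_mulVec_comm hsymm v u, hcomm]
  rw [dotProduct_comm (σ x *ᵥ v)]
  ring

lemma hasDerivAt_geodesicCurvatureDensity {g σ : Vec2 → Mat2} {x : Vec2}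
    (hg : DifferentiableAt ℝ g x) (hσ : DifferentiableAt ℝ σ x)
    (hsymm : ∀ᶠ y in 𝓝 x, (g y).IsSymm) (hσsymm : ∀ᶠ y in 𝓝 x, (σ y).IsSymm)
    (hdet : 0 < (g x).det) {u : Vec2} (hlen : u ⬝ᵥ g x *ᵥ u ≠ 0) (u' : Vec2) :
    HasDerivAt (fun s : ℝ => geodesicCurvatureDensity (fun y => g y + s • σ y) x u u')
      (areaLengthRatio (g x) u *
        (u ⬝ᵥ covDeriv g σ x u *ᵥ gNormal (g x) u
          - (u ⬝ᵥ covDeriv g σ x (gNormal (g x) u) *ᵥ u) / 2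
          + (u' + connectionMatrix g x u *ᵥ u) ⬝ᵥ rot2 u *
            normalSubTangential (g x) (σ x) u / 2)) 0 := by
  have hgx := hsymm.self_of_nhds
  have hdensity (s : ℝ) := geodesicCurvatureDensity_eq_gNormal (g := fun y => g y + s • σ y)
    (hgx.add (hσsymm.self_of_nhds.smul s)) u u'
  simp only [hdensity, christoffelLower_add_smul hg hσ]
  have hratio := hasDerivAt_areaLengthRatio_add_smul hgx hdet (σ x) hlen
  have hnormal := hasDerivAt_gNormal_add_smul hdet.ne' (σ x) u
  have hchristoffel := hasDerivAt_mulVec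
    (hasDerivAt_matrix_add_smul (christoffelLower g x u) (christoffelLower σ x u) 0)
    (hasDerivAt_const 0 u)
  refine (hratio.fun_mul ((hasDerivAt_dotProduct hnormal hchristoffel).const_add
    (u' ⬝ᵥ rot2 u))).congr_deriv ?_
  simp only [zero_smul, add_zero, mulVec_zero, neg_dotProduct]
  rw [inv_mulVec_dotProduct_christoffelLower hgx, gNormal_eq_inv_mulVec_rot2 _ u,
    inv_mulVec_dotProduct_christoffelLower hgx, ← gNormal_eq_inv_mulVec_rot2, add_dotProduct,
    dotProduct_comm (connectionMatrix _ _ _ *ᵥ _),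
    ← dotProduct_christoffelLower_mulVec_self_sub hσ hsymm hσsymm]
  ring

lemma gUnitTangent_dotProduct_mulVec_gUnitNormal_eventuallyEq {g : Vec2 → Mat2} (σ : Vec2 → Mat2)
    {γ u : ℝ → Vec2} {v u' : Vec2} {t : ℝ} (hg : DifferentiableAt ℝ g (γ t))
    (hsymm : ∀ᶠ y in 𝓝 (γ t), (g y).IsSymm) (hdet : 0 < (g (γ t)).det)
    (hγ : HasDerivAt γ v t) (hu : HasDerivAt u u' t) (hlen : 0 < u t ⬝ᵥ g (γ t) *ᵥ u t) :
    (fun s => gUnitTangent (g (γ s)) (u s) ⬝ᵥ σ (γ s) *ᵥ gUnitNormal (g (γ s)) (u s)) =ᶠ[𝓝 t]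
      fun s => areaLengthRatio (g (γ s)) (u s) * (u s ⬝ᵥ σ (γ s) *ᵥ gNormal (g (γ s)) (u s)) := by
  have hgγ := hasDerivAt_matrix_comp hg hγ
  have hlenγ := hasDerivAt_dotProduct hu (hasDerivAt_mulVec hgγ hu)
  filter_upwards [hγ.continuousAt.eventually hsymm,
    (hasDerivAt_det hgγ).continuousAt.eventually_const_lt hdet,
    hlenγ.continuousAt.eventually_const_lt hlen] with s hsymm_s hdet_s hlen_s
  exact gUnitTangent_dotProduct_mulVec_gUnitNormal hsymm_s hdet_s _ hlen_s.le

theorem firstVariation_geodesicCurvature_density_general {g σ : Vec2 → Mat2} {γ : ℝ → Vec2}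
    {t₀ : ℝ} (hg : DifferentiableAt ℝ g (γ t₀)) (hσ : DifferentiableAt ℝ σ (γ t₀))
    (hg_symm : ∀ᶠ x in 𝓝 (γ t₀), (g x).IsSymm) (hσ_symm : ∀ᶠ x in 𝓝 (γ t₀), (σ x).IsSymm)
    (hg_pos : (g (γ t₀)).PosDef) (hγ : deriv γ t₀ ≠ 0)
    (hγ' : DifferentiableAt ℝ (deriv γ) t₀) :
    HasDerivAt (fun s : ℝ => geodesicCurvatureDensity (fun y => g y + s • σ y) (γ t₀)
        (deriv γ t₀) (deriv (deriv γ) t₀))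
      (1 / 2 * ((∑ i, curlg g σ (γ t₀) i * deriv γ t₀ i) +
        deriv (fun t => gUnitTangent (g (γ t)) (deriv γ t) ⬝ᵥ
          σ (γ t) *ᵥ gUnitNormal (g (γ t)) (deriv γ t)) t₀)) 0 := by
  have hdet := hg_pos.det_pos
  have hlen : 0 < deriv γ t₀ ⬝ᵥ g (γ t₀) *ᵥ deriv γ t₀ := hg_pos.dotProduct_mulVec_pos hγ
  have hvel := (differentiableAt_of_deriv_ne_zero hγ).hasDerivAt
  have hacc := hγ'.hasDerivAt
  have hpairing := gUnitTangent_dotProduct_mulVec_gUnitNormal_eventuallyEq σ hg hg_symm hdet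
    hvel hacc hlen
  rw [hpairing.deriv_eq, (hasDerivAt_areaLengthRatio_mul_dotProduct_gNormal hg hσ hg_symm hdet
    hvel hacc hlen.ne').deriv, sum_curlg_mul hσ hg_symm hdet hlen.ne']
  refine (hasDerivAt_geodesicCurvatureDensity hg hσ hg_symm hσ_symm hdet hlen.ne' _).congr_deriv ?_
  ring

end FirstVariation

/-- first variation of the geodesic curvature density. -/
theorem firstVariation_geodesicCurvature_density
    (Ω : Set Vec2) (hΩ : IsOpen Ω)
    (g σ : Vec2 → Mat2)
    (hg : ∀ i j, ContDiffOn ℝ 1 (fun y => g y i j) Ω)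
    (hσ : ∀ i j, ContDiffOn ℝ 1 (fun y => σ y i j) Ω)
    (hg_symm : ∀ x ∈ Ω, (g x).IsSymm) (hσ_symm : ∀ x ∈ Ω, (σ x).IsSymm)
    (hg_pos : ∀ x ∈ Ω, (g x).PosDef)
    (γ : ℝ → Vec2) (hγ : ContDiff ℝ 2 γ) (hγΩ : ∀ t, γ t ∈ Ω)
    (hunit : ∀ t, deriv γ t ⬝ᵥ deriv γ t = 1)
    (t₀ : ℝ) (q τ τdot ν : Vec2)
    (hq : q = γ t₀) (hτ : τ = deriv γ t₀)
    (hτdot : τdot = deriv (deriv γ) t₀) (hν : ν = rot2 τ)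
    (F : ℝ → ℝ)
    (hF : F = fun s =>
      Real.sqrt (g q + s • σ q).det / (τ ⬝ᵥ (g q + s • σ q).mulVec τ) *
        (τdot ⬝ᵥ ν +
          ∑ i, ∑ j, ∑ k, τ i * τ j * Gamma2 (fun y => g y + s • σ y) q i j k * ν k)) :
    HasDerivAt F
      (1 / 2 * ((∑ i, curlg g σ q i * τ i) +
        deriv (fun t => gUnitTangent (g (γ t)) (deriv γ t) ⬝ᵥ
          (σ (γ t)).mulVec (gUnitNormal (g (γ t)) (deriv γ t))) t₀)) 0 := by
  subst hq hτ hτdot hν hF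
  have hΩt₀ := hΩ.mem_nhds (hγΩ t₀)
  have hdiff {h : Vec2 → Mat2} (hh : ∀ i j, ContDiffOn ℝ 1 (fun y => h y i j) Ω) :
      DifferentiableAt ℝ h (γ t₀) := differentiableAt_matrix.2 fun i j =>
    ((hh i j).differentiableOn one_ne_zero).differentiableAt hΩt₀
  have hvel : deriv γ t₀ ≠ 0 := fun h => by simpa [h] using hunit t₀
  have hacc := (hγ.iterate_deriv' 1 1).differentiable one_ne_zero t₀
  simpa only [geodesicCurvatureDensity_eq_sum] using
    firstVariation_geodesicCurvature_density_general (hdiff hg) (hdiff hσ)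
      (Filter.mem_of_superset hΩt₀ hg_symm) (Filter.mem_of_superset hΩt₀ hσ_symm)
      (hg_pos _ (hγΩ t₀)) hvel hacc
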